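/- Let H > 0 and B ∈ (0,1) ∪ (1,∞). Set c̃ = −(1+B²)/(6B), l̃ = −(B²+1) − 2B·c̃ + (B²+1)·c̃² + 2B·c̃³, m̃ = 2B − 2c̃(B²+1) − 6B·c̃², ñ = −2B, and assume 4m̃³ + 27·ñ·l̃² ≠ 0. Let F(s) = 1 + B² − 2B·cosh(2Hs), let I = {s ∈ ℝ : F(s) > 0} (a nonempty open interval containing 0), and define on I the functions z(s) = (1/(2H))·√(F(s)) and x(s) = ∫_{0}^{s} (B·cosh(2Ht) − 1)/√(F(t)) dt. Then the spacelike CMC surface of revolution about the spacelike x-axis, S = {(x(s), z(s)·sinh θ, z(s)·cosh θ) : s ∈ I, θ ∈ ℝ} ⊆ ℝ³, is not algebraic. -/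

import Mathlib

/-!
The profile curve is uniformized by an angle `φ` with `√(F s) = |B - 1| cos φ`: in this angle both
coordinates extend to real-analytic functions on `ℝ`, the radius `z` being proportional to `cos φ`
and the axial coordinate `x` having a `2π`-periodic derivative of constant sign. A full turn
therefore returns `z` to its value and translates `x` by some `L ≠ 0`.

A polynomial vanishing on the surface vanishes on its analytic continuation, hence at all the
translates of each point by multiples of `L` along the axis. Being polynomial in `x`, it vanishes on
the whole axial line through that point, and these lines fill an open set.
-/

open Set Filter Topology Real
open scoped ENNReal ContDiff

section Primitive

variable {𝕜 E : Type*} [RCLike 𝕜] [NormedAddCommGroup E] [NormedSpace 𝕜 E]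

/-- The formal primitive of a power series in one variable, with constant term `0` (supplied by the
convention `0⁻¹ = 0`). -/
noncomputable def primitiveSeries (p : FormalMultilinearSeries 𝕜 𝕜 E) :
    FormalMultilinearSeries 𝕜 𝕜 E :=
  fun n ↦ ContinuousMultilinearMap.mkPiRing 𝕜 (Fin n) ((n : 𝕜)⁻¹ • p.coeff (n - 1))

variable {p : FormalMultilinearSeries 𝕜 𝕜 E}

theorem coeff_primitiveSeries (n : ℕ) :
    (primitiveSeries p).coeff n = (n : 𝕜)⁻¹ • p.coeff (n - 1) :=
  (ContinuousMultilinearMap.mkPiRing_apply _ _).trans (by simp)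

theorem radius_le_radius_primitiveSeries : p.radius ≤ (primitiveSeries p).radius := by
  refine ENNReal.le_of_forall_nnreal_lt fun r hr ↦ ?_
  obtain ⟨C, -, hC⟩ := p.norm_mul_pow_le_of_lt_radius hr
  refine FormalMultilinearSeries.le_radius_of_eventually_le _ (C * r) ?_
  filter_upwards [eventually_ge_atTop 1] with n hn
  obtain ⟨k, rfl⟩ := Nat.exists_eq_add_of_le' hn
  have hnorm : ‖primitiveSeries p (k + 1)‖ ≤ ‖p k‖ := by
    rw [primitiveSeries, ContinuousMultilinearMap.norm_mkPiRing, norm_smul, norm_inv,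
      RCLike.norm_natCast, Nat.add_sub_cancel, ← p.norm_apply_eq_norm_coef]
    exact mul_le_of_le_one_left (norm_nonneg _) (inv_le_one_of_one_le₀ (by exact_mod_cast hn))
  calc ‖primitiveSeries p (k + 1)‖ * (r : ℝ) ^ (k + 1) ≤ ‖p k‖ * (r : ℝ) ^ (k + 1) := by gcongr
    _ = ‖p k‖ * (r : ℝ) ^ k * r := by ring
    _ ≤ C * r := by gcongr; exact hC k

variable [CompleteSpace E]

theorem hasDerivAt_primitiveSeries_sum {x : 𝕜} (hx : ‖x‖ₑ < p.radius) :
    HasDerivAt (primitiveSeries p).sum (p.sum x) x := by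
  have hx' := hx.trans_le radius_le_radius_primitiveSeries
  convert! ((primitiveSeries p).hasFDerivAt_sum hx').hasDerivAt using 1
  have hsum := (primitiveSeries p).derivSeries.hasSum (x := x) (by
    simpa using! hx'.trans_le (primitiveSeries p).radius_le_radius_derivSeries)
  refine .trans (tsum_congr fun n ↦ ?_) (hsum.mapL (ContinuousLinearMap.apply 𝕜 E (1 : 𝕜))).tsum_eq
  have hn : (n + 1 : 𝕜) ≠ 0 := by exact_mod_cast n.succ_ne_zero
  simp [coeff_primitiveSeries,
    ← Nat.cast_smul_eq_nsmul 𝕜, smul_smul, hn]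

theorem analyticAt_of_eventually_hasDerivAt {f g : 𝕜 → E} {a : 𝕜} (hg : AnalyticAt 𝕜 g a)
    (hf : ∀ᶠ t in 𝓝 a, HasDerivAt f (g t) t) : AnalyticAt 𝕜 f a := by
  obtain ⟨p, r, hp⟩ := hg
  have hG : AnalyticAt 𝕜 (fun t ↦ (primitiveSeries p).sum (t - a)) a := by
    have hr := (hp.r_pos.trans_le hp.r_le).trans_le (radius_le_radius_primitiveSeries (p := p))
    simpa using! ((primitiveSeries p).hasFPowerSeriesOnBall hr).comp_sub a |>.analyticAt
  have hdiff : ∀ᶠ t in 𝓝 a,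
      HasDerivAt (fun t ↦ f t - (primitiveSeries p).sum (t - a)) 0 t := by
    filter_upwards [hf, Metric.eball_mem_nhds a hp.r_pos] with t hft ht
    have hmem : t - a ∈ Metric.eball 0 r := by
      simpa [edist_eq_enorm_sub, Metric.mem_eball] using ht
    have hG' := (hasDerivAt_primitiveSeries_sum (p := p) (x := t - a)
      ((by simpa using hmem : ‖t - a‖ₑ < r).trans_le hp.r_le)).comp_sub_const t a
    rw [← hp.sum hmem, add_sub_cancel] at hG'
    simpa using! hft.sub hG'
  obtain ⟨ε, hε, hball⟩ := Metric.eventually_nhds_iff_ball.1 hdiff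
  obtain ⟨c, hc⟩ := Metric.isOpen_ball.exists_is_const_of_deriv_eq_zero
    (convex_ball a ε).isPreconnected
    (fun t ht ↦ (hball t ht).differentiableAt.differentiableWithinAt) fun t ht ↦ (hball t ht).deriv
  refine (hG.add (analyticAt_const (v := c))).congr ?_
  filter_upwards [Metric.ball_mem_nhds a hε] with t ht
  simp [← hc t ht]

end Primitive

theorem analyticOnNhd_intervalIntegral {E : Type*} [NormedAddCommGroup E] [NormedSpace ℝ E]
    [CompleteSpace E] {g : ℝ → E} (hg : AnalyticOnNhd ℝ g univ) (a : ℝ) :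
    AnalyticOnNhd ℝ (fun t ↦ ∫ u in a..t, g u) univ := by
  have hcont : Continuous g := continuousOn_univ.1 hg.continuousOn
  exact fun t ht ↦ analyticAt_of_eventually_hasDerivAt (hg t ht) <| .of_forall fun u ↦
    (hcont.integral_hasStrictDerivAt a u).hasDerivAt

theorem eval_cons_eq_zero_of_infinite {R : Type*} [CommRing R] [IsDomain R] {n : ℕ}
    {P : MvPolynomial (Fin (n + 1)) R} {y : Fin n → R} {A : Set R} (hA : A.Infinite)
    (hP : ∀ v ∈ A, MvPolynomial.eval (Fin.cons v y : Fin (n + 1) → R) P = 0) (v : R) :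
    MvPolynomial.eval (Fin.cons v y : Fin (n + 1) → R) P = 0 := by
  simp only [MvPolynomial.eval_eq_eval_mv_eval'] at hP ⊢
  rw [Polynomial.eq_zero_of_infinite_isRoot _ (hA.mono hP), Polynomial.eval_zero]

theorem eval_cons_eq_zero_of_periodic {n : ℕ} {X : ℝ → ℝ} {Y : ℝ → Fin n → ℝ} {T L : ℝ}
    (hX : AnalyticOnNhd ℝ X univ) (hY : ∀ i, AnalyticOnNhd ℝ (Y · i) univ)
    (hXT : ∀ t, X (t + T) = X t + L) (hL : L ≠ 0) (hYT : Function.Periodic Y T)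
    {P : MvPolynomial (Fin (n + 1)) ℝ} {t₀ : ℝ}
    (hP : ∀ᶠ t in 𝓝 t₀, MvPolynomial.eval (Fin.cons (X t) (Y t) : Fin (n + 1) → ℝ) P = 0)
    (v t : ℝ) : MvPolynomial.eval (Fin.cons v (Y t) : Fin (n + 1) → ℝ) P = 0 := by
  have hcurve (u : ℝ) : MvPolynomial.eval (Fin.cons (X u) (Y u) : Fin (n + 1) → ℝ) P = 0 := by
    have hana : AnalyticOnNhd ℝ
        (fun u ↦ MvPolynomial.aeval (Fin.cons (X u) (Y u) : Fin (n + 1) → ℝ) P) univ :=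
      .aeval_mvPolynomial (Fin.cases (by simpa using hX) (by simpa using hY)) P
    simp only [MvPolynomial.aeval_eq_eval] at hana
    exact congrFun (hana.eq_of_eventuallyEq analyticOnNhd_const hP) u
  have htranslate (k : ℕ) : X (t + k * T) = X t + k * L := by
    induction k with
    | zero => simp
    | succ k ih => rw [Nat.cast_succ, add_one_mul, ← add_assoc, hXT, ih]; ring
  refine eval_cons_eq_zero_of_infinite (A := range fun k : ℕ ↦ X t + k * L)
    (infinite_range_of_injective fun i j hij ↦ by simpa [hL] using hij) ?_ v
  rintro _ ⟨k, rfl⟩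
  simpa only [htranslate, hYT.nat_mul k t] using hcurve (t + k * T)

theorem exists_sqrt_mul_sinh_cosh {y w : ℝ} (h : |y| < w) :
    ∃ θ, √(w ^ 2 - y ^ 2) * sinh θ = y ∧ √(w ^ 2 - y ^ 2) * cosh θ = w := by
  have hw : 0 < w := (abs_nonneg y).trans_lt h
  have hr : 0 < w ^ 2 - y ^ 2 := sub_pos.2 (sq_lt_sq.2 (by rwa [abs_of_pos hw]))
  refine ⟨arsinh (y / √(w ^ 2 - y ^ 2)), ?_, ?_⟩
  · rw [sinh_arsinh, mul_div_cancel₀ _ (sqrt_pos.2 hr).ne']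
  · rw [cosh_arsinh, ← sqrt_mul hr.le, div_pow, sq_sqrt hr.le, mul_add, mul_div_cancel₀ _ hr.ne',
      mul_one, sub_add_cancel, sqrt_sq hw.le]

theorem eq_zero_of_eval_sinh_cosh {P : MvPolynomial (Fin 3) ℝ} {a : ℝ} (ha : 0 < a)
    (hP : ∀ v, ∀ r ∈ Ioo 0 a, ∀ θ, MvPolynomial.eval ![v, r * sinh θ, r * cosh θ] P = 0) :
    P = 0 := by
  refine MvPolynomial.funext_set ![univ, Ioo 0 (a / 2), Ioo (a / 2) a] ?_ fun p hp ↦ ?_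
  · intro i
    fin_cases i
    exacts [infinite_univ, Ioo_infinite (by linarith), Ioo_infinite (by linarith)]
  · obtain ⟨hy₀, hy⟩ : p 1 ∈ Ioo 0 (a / 2) := hp 1 trivial
    obtain ⟨hw, hw₁⟩ : p 2 ∈ Ioo (a / 2) a := hp 2 trivial
    obtain ⟨θ, hsinh, hcosh⟩ := exists_sqrt_mul_sinh_cosh (y := p 1) (w := p 2)
      (by rw [abs_of_pos hy₀]; linarith)
    have hr : √(p 2 ^ 2 - p 1 ^ 2) ∈ Ioo 0 a :=
      ⟨sqrt_pos.2 (by nlinarith), (sqrt_lt' ha).2 (by nlinarith)⟩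
    have hzero := hP (p 0) _ hr θ
    rw [hsinh, hcosh] at hzero
    rw [map_zero, ← hzero]
    congr 2
    ext i
    fin_cases i <;> rfl

section Profile

/-- The function `F` of the Kenmotsu-type parametrization: `2 H z(s) = √(F s)`. -/
noncomputable def radicand (H B s : ℝ) : ℝ := 1 + B ^ 2 - 2 * B * cosh (2 * H * s)

/-- The parameter `s` of the profile curve as a function of the angle `φ` for which
`√(F s) = |B - 1| |cos φ|`; it uniformizes the square root at the ends of `I`. -/
noncomputable def arcParam (H B φ : ℝ) : ℝ := arsinh (|B - 1| * sin φ / (2 * √B)) / H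

/-- The derivative of the axial coordinate `x` of the profile curve in the angle `φ` of
`arcParam`. -/
noncomputable def axialSpeed (H B φ : ℝ) : ℝ :=
  (B - 1) / H * ((1 + (B - 1) / 2 * sin φ ^ 2) / √(4 * B + (B - 1) ^ 2 * sin φ ^ 2))

/-- The axial coordinate `x` of the profile curve as a function of the angle `φ` of `arcParam`,
continued analytically to all of `ℝ`. -/
noncomputable def axialCoord (H B φ : ℝ) : ℝ := ∫ u in (0 : ℝ)..φ, axialSpeed H B u

variable {H B : ℝ}

theorem mul_cosh_arcParam (hH : H ≠ 0) (hB : 0 < B) (φ : ℝ) :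
    B * cosh (2 * H * arcParam H B φ) = B + (B - 1) ^ 2 / 2 * sin φ ^ 2 := by
  rw [mul_assoc, arcParam, mul_div_cancel₀ _ hH, cosh_two_mul, cosh_sq', sinh_arsinh, div_pow,
    mul_pow, mul_pow, sq_abs, sq_sqrt hB.le]
  field_simp
  ring

theorem radicand_arcParam (hH : H ≠ 0) (hB : 0 < B) (φ : ℝ) :
    radicand H B (arcParam H B φ) = ((B - 1) * cos φ) ^ 2 := by
  rw [radicand, mul_assoc 2 B, mul_cosh_arcParam hH hB, mul_pow, cos_sq']
  ring

theorem sqrt_radicand_arcParam (hH : H ≠ 0) (hB : 0 < B) {φ : ℝ}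
    (hφ : φ ∈ Ioo (-(π / 2)) (π / 2)) :
    √(radicand H B (arcParam H B φ)) = |B - 1| * cos φ := by
  rw [radicand_arcParam hH hB, sqrt_sq_eq_abs, abs_mul, abs_of_pos (cos_pos_of_mem_Ioo hφ)]

theorem radicand_arcParam_pos (hH : H ≠ 0) (hB : 0 < B) (hB₁ : B ≠ 1) {φ : ℝ}
    (hφ : φ ∈ Ioo (-(π / 2)) (π / 2)) : 0 < radicand H B (arcParam H B φ) := by
  rw [radicand_arcParam hH hB]
  exact sq_pos_iff.2 (mul_ne_zero (sub_ne_zero.2 hB₁) (cos_pos_of_mem_Ioo hφ).ne')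

theorem hasDerivAt_arcParam (hB : 0 < B) (φ : ℝ) :
    HasDerivAt (arcParam H B)
      (|B - 1| * cos φ / √(4 * B + (B - 1) ^ 2 * sin φ ^ 2) / H) φ := by
  have hsqrt : √(4 * B + (B - 1) ^ 2 * sin φ ^ 2) =
      2 * √B * √(1 + (|B - 1| * sin φ / (2 * √B)) ^ 2) := by
    rw [← sqrt_sq (by positivity : 0 ≤ 2 * √B), ← sqrt_mul (by positivity), sqrt_sq (by positivity),
      mul_pow, div_pow, mul_pow, mul_pow, sq_abs, sq_sqrt hB.le]
    congr 1
    field_simp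
    ring
  have hderiv :=
    (((hasDerivAt_sin φ).const_mul |B - 1|).div_const (2 * √B)).arsinh.div_const H
  refine hderiv.congr_deriv ?_
  rw [hsqrt, smul_eq_mul]
  field_simp

theorem axialSpeed_eq (hH : H ≠ 0) (hB : 0 < B) (hB₁ : B ≠ 1) {φ : ℝ}
    (hφ : φ ∈ Ioo (-(π / 2)) (π / 2)) :
    (B * cosh (2 * H * arcParam H B φ) - 1) / √(radicand H B (arcParam H B φ)) *
      (|B - 1| * cos φ / √(4 * B + (B - 1) ^ 2 * sin φ ^ 2) / H) = axialSpeed H B φ := by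
  have := cos_pos_of_mem_Ioo hφ
  have := abs_pos.2 (sub_ne_zero.2 hB₁)
  rw [mul_cosh_arcParam hH hB, sqrt_radicand_arcParam hH hB hφ, axialSpeed]
  field_simp
  ring

theorem integral_arcParam (hH : H ≠ 0) (hB : 0 < B) (hB₁ : B ≠ 1) {φ : ℝ}
    (hφ : φ ∈ Ioo (-(π / 2)) (π / 2)) :
    ∫ t in (0 : ℝ)..arcParam H B φ, (B * cosh (2 * H * t) - 1) / √(radicand H B t) =
      axialCoord H B φ := by
  have hsub : uIcc 0 φ ⊆ Ioo (-(π / 2)) (π / 2) :=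
    ordConnected_Ioo.uIcc_subset ⟨by simp [pi_pos], by simp [pi_pos]⟩ hφ
  have hcont : Continuous fun u ↦ |B - 1| * cos u / √(4 * B + (B - 1) ^ 2 * sin u ^ 2) / H :=
    .div_const (.div (by fun_prop) (by fun_prop) fun u ↦ (sqrt_pos.2 (by positivity)).ne') H
  have hintegrand : ContinuousOn (fun t ↦ (B * cosh (2 * H * t) - 1) / √(radicand H B t))
      (arcParam H B '' uIcc 0 φ) := by
    refine .div (by fun_prop) (by unfold radicand; fun_prop) ?_
    rintro _ ⟨u, hu, rfl⟩
    exact (sqrt_pos.2 (radicand_arcParam_pos hH hB hB₁ (hsub hu))).ne'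
  have hsubst := intervalIntegral.integral_comp_mul_deriv' (fun u _ ↦ hasDerivAt_arcParam hB u)
    hcont.continuousOn hintegrand
  rw [show arcParam H B 0 = 0 by simp [arcParam]] at hsubst
  rw [← hsubst, axialCoord]
  exact intervalIntegral.integral_congr fun u hu ↦ axialSpeed_eq hH hB hB₁ (hsub hu)

theorem analyticOnNhd_axialSpeed (hB : 0 < B) : AnalyticOnNhd ℝ (axialSpeed H B) univ := by
  intro φ _
  have hden : 0 < 4 * B + (B - 1) ^ 2 * sin φ ^ 2 := by positivity
  have hsqrt : ContDiffAt ℝ ω (fun u ↦ √(4 * B + (B - 1) ^ 2 * sin u ^ 2)) φ :=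
    .sqrt (by fun_prop) hden.ne'
  exact ContDiffAt.analyticAt <|
    .mul (by fun_prop) (.div (by fun_prop) hsqrt (sqrt_pos.2 hden).ne')

theorem analyticOnNhd_axialCoord (hB : 0 < B) : AnalyticOnNhd ℝ (axialCoord H B) univ :=
  analyticOnNhd_intervalIntegral (analyticOnNhd_axialSpeed hB) 0

theorem axialCoord_add_two_pi (hB : 0 < B) (φ : ℝ) :
    axialCoord H B (φ + 2 * π) = axialCoord H B φ + axialCoord H B (2 * π) := by
  have hper : Function.Periodic (axialSpeed H B) (2 * π) := fun u ↦ by simp [axialSpeed]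
  have hcont : Continuous (axialSpeed H B) :=
    continuousOn_univ.1 (analyticOnNhd_axialSpeed hB).continuousOn
  simpa [axialCoord] using
    hper.intervalIntegral_add_eq_add 0 φ fun _ _ ↦ hcont.intervalIntegrable _ _

theorem axialCoord_two_pi_ne_zero (hH : H ≠ 0) (hB : 0 < B) (hB₁ : B ≠ 1) :
    axialCoord H B (2 * π) ≠ 0 := by
  have hnum (u : ℝ) : 0 < 1 + (B - 1) / 2 * sin u ^ 2 := by
    nlinarith [sin_sq_le_one u, sq_nonneg (sin u)]
  have hden (u : ℝ) : 0 < 4 * B + (B - 1) ^ 2 * sin u ^ 2 := by positivity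
  simp only [axialCoord, axialSpeed, intervalIntegral.integral_const_mul]
  refine mul_ne_zero (div_ne_zero (sub_ne_zero.2 hB₁) hH) (ne_of_gt ?_)
  have hcont : Continuous fun u ↦
      (1 + (B - 1) / 2 * sin u ^ 2) / √(4 * B + (B - 1) ^ 2 * sin u ^ 2) :=
    .div (by fun_prop) (by fun_prop) fun u ↦ (sqrt_pos.2 (hden u)).ne'
  exact intervalIntegral.intervalIntegral_pos_of_pos (hcont.intervalIntegrable _ _)
    (fun u ↦ div_pos (hnum u) (sqrt_pos.2 (hden u))) two_pi_pos

theorem eq_zero_of_eventually_eval_axialCoord (hH : 0 < H) (hB : 0 < B) (hB₁ : B ≠ 1)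
    {P : MvPolynomial (Fin 3) ℝ}
    (hP : ∀ θ, ∀ᶠ φ in 𝓝 0, MvPolynomial.eval ![axialCoord H B φ,
      |B - 1| / (2 * H) * cos φ * sinh θ, |B - 1| / (2 * H) * cos φ * cosh θ] P = 0) :
    P = 0 := by
  have ha : 0 < |B - 1| / (2 * H) := div_pos (abs_pos.2 (sub_ne_zero.2 hB₁)) (by positivity)
  have hline (θ v φ : ℝ) : MvPolynomial.eval
      ![v, |B - 1| / (2 * H) * cos φ * sinh θ, |B - 1| / (2 * H) * cos φ * cosh θ] P = 0 := by
    refine eval_cons_eq_zero_of_periodic (analyticOnNhd_axialCoord hB) (fun i t _ ↦ ?_)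
      (axialCoord_add_two_pi hB) (axialCoord_two_pi_ne_zero hH.ne' hB hB₁) (fun t ↦ ?_) (hP θ) v φ
    · fin_cases i <;> exact ContDiffAt.analyticAt (by dsimp; fun_prop)
    · simp
  refine eq_zero_of_eval_sinh_cosh ha fun v r ⟨hr₀, hr⟩ θ ↦ ?_
  have hcos : |B - 1| / (2 * H) * cos (arccos (r / (|B - 1| / (2 * H)))) = r := by
    rw [cos_arccos (by linarith [div_pos hr₀ ha]) ((div_le_one ha).2 hr.le),
      mul_div_cancel₀ _ ha.ne']
  simpa only [hcos] using hline θ v (arccos (r / (|B - 1| / (2 * H))))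

end Profile

/-- The spacelike CMC surface of revolution about the spacelike x-axis in
Lorentz–Minkowski space `E₁³` (Kenmotsu-type parametrization, parameter `B ∈ (0,1) ∪ (1,∞)`,
nonvanishing discriminant of the associated elliptic curve) is not algebraic. -/
theorem spacelike_cmc_revolution_spacelike_axis_not_algebraic
    (H B : ℝ) (hH : 0 < H) (hB : B ∈ Set.Ioo (0:ℝ) 1 ∪ Set.Ioi (1:ℝ))
    (c l m n : ℝ)
    (hc : c = -(1 + B ^ 2) / (6 * B))
    (hl : l = -(B ^ 2 + 1) - 2 * B * c + (B ^ 2 + 1) * c ^ 2 + 2 * B * c ^ 3)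
    (hm : m = 2 * B - 2 * c * (B ^ 2 + 1) - 6 * B * c ^ 2)
    (hn : n = -(2 * B))
    (hdisc : 4 * m ^ 3 + 27 * n * l ^ 2 ≠ 0)
    (F : ℝ → ℝ) (hF : ∀ s, F s = 1 + B ^ 2 - 2 * B * Real.cosh (2 * H * s))
    (I : Set ℝ) (hI : I = {s : ℝ | 0 < F s})
    (hI' : I.Nonempty ∧ IsOpen I ∧ (0:ℝ) ∈ I)
    (x z : ℝ → ℝ)
    (hz : ∀ s ∈ I, z s = (1 / (2 * H)) * Real.sqrt (F s))
    (hx : ∀ s ∈ I, x s = ∫ t in (0:ℝ)..s,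
      (B * Real.cosh (2 * H * t) - 1) / Real.sqrt (F t))
    (S : Set (Fin 3 → ℝ))
    (hS : S = {p : Fin 3 → ℝ | ∃ s ∈ I, ∃ θ : ℝ,
      p = ![x s, z s * Real.sinh θ, z s * Real.cosh θ]}) :
    ¬ ∃ P : MvPolynomial (Fin 3) ℝ, P ≠ 0 ∧ ∀ p ∈ S, MvPolynomial.eval p P = 0 := by
  rintro ⟨P, hP₀, hP⟩
  have hB₀ : 0 < B := hB.elim And.left fun h ↦ zero_lt_one.trans h
  have hB₁ : B ≠ 1 := hB.elim (fun h ↦ h.2.ne) fun h ↦ ne_of_gt h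
  obtain rfl : F = radicand H B := funext hF
  subst hI hS
  refine hP₀ (eq_zero_of_eventually_eval_axialCoord hH hB₀ hB₁ fun θ ↦ ?_)
  filter_upwards [Ioo_mem_nhds (neg_lt_zero.2 pi_div_two_pos) pi_div_two_pos] with φ hφ
  have hs : 0 < radicand H B (arcParam H B φ) := radicand_arcParam_pos hH.ne' hB₀ hB₁ hφ
  have hx' : x (arcParam H B φ) = axialCoord H B φ :=
    (hx _ hs).trans (integral_arcParam hH.ne' hB₀ hB₁ hφ)
  have hz' : z (arcParam H B φ) = |B - 1| / (2 * H) * cos φ := by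
    rw [hz _ hs, sqrt_radicand_arcParam hH.ne' hB₀ hφ]
    ring
  simpa only [hx', hz'] using hP _ ⟨arcParam H B φ, hs, θ, rfl⟩
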